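/- Let p be an odd prime, q = p^m, and n ≥ 2. Suppose f : L∖{0} → K is surjective onto K, difference balanced, and d-homogeneous. Then D₀ := {x ∈ L∖{0} : f(x) = 0}, viewed as a subset of L^×, is a divisible difference set with parameters ((q^n−1)/(q−1), q−1, q^{n−1}−1, q^{n−1}−1, q^{n−2}−1) relative to the subgroup K^×: |D₀| = q^{n−1}−1, every g ∈ K^× with g ≠ 1 has exactly q^{n−1}−1 representations g = d₁d₂⁻¹ with d₁, d₂ ∈ D₀, and every g ∈ L^×∖K^× has exactly q^{n−2}−1 such representations. -/

import Mathlib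

/-- A function `f : L∖{0} → K` is balanced. -/
def IsBalanced {K L : Type*} [Field K] [Field L] (q n : ℕ) (f : L → K) : Prop :=
  Nat.card {x : L | x ≠ 0 ∧ f x = 0} = q ^ (n - 1) - 1 ∧
    ∀ b : K, b ≠ 0 → Nat.card {x : L | x ≠ 0 ∧ f x = b} = q ^ (n - 1)

/-- A function `f : L∖{0} → K` is difference balanced. -/
def IsDiffBalanced {K L : Type*} [Field K] [Field L] (q n : ℕ) (f : L → K) : Prop :=
  ∀ a : L, a ≠ 0 → a ≠ 1 → IsBalanced q n (fun x => f (a * x) - f x)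

/-- `f` is `d`-homogeneous: `gcd(d, q−1) = 1` and `f(cx) = c^d f(x)` for all
`c ∈ K∖{0}` and `x ∈ L∖{0}`. -/
def IsDHomogeneous {K L : Type*} [Field K] [Field L] [Algebra K L] (q d : ℕ)
    (f : L → K) : Prop :=
  Nat.Coprime d (q - 1) ∧
    ∀ c : K, c ≠ 0 → ∀ x : L, x ≠ 0 → f (algebraMap K L c * x) = c ^ d * f x

/-- `N_{b₁,b₂}(a) = |{x ∈ L∖{0} : f(x) = b₁ and f(ax) = b₂}|`. -/
noncomputable def Ntt {K L : Type*} [Field K] [Field L] (f : L → K) (a : L) (b₁ b₂ : K) : ℕ :=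
  Nat.card {x : L | x ≠ 0 ∧ f x = b₁ ∧ f (a * x) = b₂}

/-- `f` is two-tuple balanced. -/
def IsTwoTupleBalanced {K L : Type*} [Field K] [Field L] [Algebra K L] (q n : ℕ)
    (f : L → K) : Prop :=
  (∀ a : L, a ≠ 0 → (∀ c : K, algebraMap K L c ≠ a) →
      (Ntt f a 0 0 = q ^ (n - 2) - 1 ∧
        ∀ b₁ b₂ : K, ¬(b₁ = 0 ∧ b₂ = 0) → Ntt f a b₁ b₂ = q ^ (n - 2))) ∧
  (∀ c : K, c ≠ 0 → ∃ μ : K,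
      (∀ x : L, x ≠ 0 → f (algebraMap K L c * x) = μ * f x) ∧
      Ntt f (algebraMap K L c) 0 0 = q ^ (n - 1) - 1 ∧
      (∀ b₁ : K, b₁ ≠ 0 → Ntt f (algebraMap K L c) b₁ (μ * b₁) = q ^ (n - 1)) ∧
      (∀ b₁ b₂ : K, b₂ ≠ μ * b₁ → Ntt f (algebraMap K L c) b₁ b₂ = 0))

/-- `D ⊆ G` is an `(m, n, k, λ₁, λ₂)` divisible difference set relative to `N`:
`|G| = mn`, `|N| = n`, `|D| = k`, every `g ∈ N∖{1}` has exactly `λ₁` representations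
`g = d₁d₂⁻¹` with `d₁, d₂ ∈ D`, and every `g ∉ N` has exactly `λ₂`. -/
def IsDivDiffSet {G : Type*} [Group G] (D : Set G) (N : Subgroup G)
    (m n k l₁ l₂ : ℕ) : Prop :=
  Nat.card G = m * n ∧ Nat.card N = n ∧ Nat.card D = k ∧
    (∀ g : G, g ∈ N → g ≠ 1 →
      Nat.card {pq : G × G // pq.1 ∈ D ∧ pq.2 ∈ D ∧ pq.1 * pq.2⁻¹ = g} = l₁) ∧
    (∀ g : G, g ∉ N →
      Nat.card {pq : G × G // pq.1 ∈ D ∧ pq.2 ∈ D ∧ pq.1 * pq.2⁻¹ = g} = l₂)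

open Finset in
/-- If a finite type `X` carries two functions `u v : X → K` such that each equation `t * v = u`
with `t : K`, as well as `v = 0`, has exactly `z` solutions, then the number of common zeros of
`u` and `v` is determined by `z`. -/
theorem card_common_zeros {X K : Type*} [Fintype X] [Field K] [Fintype K] [DecidableEq K]
    (u v : X → K) (z : ℕ) (hz : ∀ t : K, #{x | t * v x = u x} = z) (hv : #{x | v x = 0} = z) :
    Fintype.card K * #{x | u x = 0 ∧ v x = 0} + Fintype.card X = (Fintype.card K + 1) * z := by
  have hcount : ∀ x, #{t : K | t * v x = u x} =
      (if u x = 0 ∧ v x = 0 then Fintype.card K else 0) + if v x = 0 then 0 else 1 := by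
    intro x
    by_cases hvx : v x = 0
    · by_cases hux : u x = 0
      · simp [hvx, hux]
      · simp [hvx, hux, Ne.symm hux]
    · have : ({t : K | t * v x = u x} : Finset K) = {u x / v x} := by
        ext t
        simp [eq_div_iff hvx]
      simp [this, hvx]
  have hdouble : ∑ x, #{t : K | t * v x = u x} = Fintype.card K * z := by
    simp_rw [card_filter]
    rw [sum_comm]
    simp_rw [← card_filter, hz]
    simp
  have hsplit := card_filter_add_card_filter_not (s := (univ : Finset X)) (fun x => v x = 0)
  simp_rw [hcount, sum_add_distrib] at hdouble
  rw [← sum_filter, sum_const, smul_eq_mul] at hdouble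
  have hnot : ∑ x : X, (if v x = 0 then 0 else 1) = #{x | ¬ v x = 0} := by
    rw [card_filter]
    exact sum_congr rfl fun x _ => by split_ifs <;> simp_all
  rw [hnot] at hdouble
  rw [card_univ] at hsplit
  nlinarith

/-- Counting nonzero elements of a field with a property amounts to counting units. -/
theorem card_ne_zero_and_eq_card_units {L : Type*} [Field L] (P : L → Prop) :
    Nat.card {x : L | x ≠ 0 ∧ P x} = Nat.card {u : Lˣ // P u} :=
  Nat.card_congr
    { toFun := fun x => ⟨Units.mk0 x.1 x.2.1, x.2.2⟩
      invFun := fun u => ⟨u.1, u.1.ne_zero, u.2⟩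
      left_inv := fun _ => rfl
      right_inv := fun _ => Subtype.ext (Units.ext rfl) }

/-- Representations `g = d₁ * d₂⁻¹` with `d₁, d₂ ∈ D` correspond to elements `x ∈ D` with
`g * x ∈ D`. -/
theorem card_quotient_representations {G : Type*} [Group G] (D : Set G) (g : G) :
    Nat.card {pq : G × G // pq.1 ∈ D ∧ pq.2 ∈ D ∧ pq.1 * pq.2⁻¹ = g} =
      Nat.card {x : G // x ∈ D ∧ g * x ∈ D} :=
  Nat.card_congr
    { toFun := fun y => ⟨y.1.2, y.2.2.1, by
        have hg : g * y.1.2 = y.1.1 := by simp only [← mul_inv_eq_iff_eq_mul.1 y.2.2.2]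
        exact hg ▸ y.2.1⟩
      invFun := fun x => ⟨(g * x.1, x.1), x.2.2, x.2.1, mul_inv_cancel_right _ _⟩
      left_inv := by
        rintro ⟨⟨a, b⟩, ha, hb, rfl⟩
        simp
      right_inv := fun _ => rfl }

section DHomogeneous

variable {K L : Type*} [Field K] [Field L] [Algebra K L] [Fintype K] {q n d : ℕ} {f : L → K}

/-- Every unit of `K` is a `d`-th power if `d` is coprime to `|K| - 1`. -/
theorem exists_units_pow_eq (hK : Fintype.card K = q) (hd : Nat.Coprime d (q - 1)) (t : Kˣ) :
    ∃ c : Kˣ, c ^ d = t := by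
  have hcop : (Nat.card Kˣ).Coprime d := by
    rw [Nat.card_units, Nat.card_eq_fintype_card, hK]
    exact hd.symm
  exact (powCoprime hcop).surjective t

/-- The zeros of a difference balanced `d`-homogeneous function over a field with more than two
elements. -/
theorem IsDHomogeneous.card_zeros (hd : IsDHomogeneous q d f) (hK : Fintype.card K = q)
    (hq : 2 < q) (hdb : IsDiffBalanced q n f) :
    Nat.card {u : Lˣ // f u = 0} = q ^ (n - 1) - 1 := by
  obtain ⟨t, ht0, ht1⟩ : ∃ t : K, t ≠ 0 ∧ t ≠ 1 := by
    classical
    obtain ⟨t, ht⟩ := Finset.exists_mem_notMem_of_card_lt_card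
      (s := ({0, 1} : Finset K)) (t := Finset.univ)
      (Finset.card_le_two.trans_lt (by rwa [Finset.card_univ, hK]))
    exact ⟨t, by simpa using ht⟩
  obtain ⟨c, hc⟩ := exists_units_pow_eq hK hd.1 (Units.mk0 t ht0)
  have hct : (c : K) ^ d = t := by simpa using congrArg Units.val hc
  have hc1 : (c : K) ≠ 1 := fun h => ht1 (by rw [← hct, h, one_pow])
  have hbal := (hdb (algebraMap K L c) (by simp) (by simpa using hc1)).1
  rw [card_ne_zero_and_eq_card_units fun x => f (algebraMap K L c * x) - f x = 0] at hbal
  rw [← hbal]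
  refine Nat.card_congr (Equiv.subtypeEquivRight fun u => ?_)
  rw [hd.2 c c.ne_zero u u.ne_zero, hct, ← sub_one_mul]
  simp [sub_ne_zero.2 ht1]

/-- The common zeros of `x ↦ f x` and `x ↦ f (a * x)` for a unit `a` outside `K`. -/
theorem IsDHomogeneous.card_common_zeros [Fintype L] (hd : IsDHomogeneous q d f)
    (hK : Fintype.card K = q) (hq : 2 < q) (hn : 2 ≤ n) (hL : Fintype.card L = q ^ n)
    (hdb : IsDiffBalanced q n f) (a : Lˣ)
    (ha : a ∉ (Units.map (algebraMap K L).toMonoidHom).range) :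
    Nat.card {u : Lˣ // f u = 0 ∧ f (a * u) = 0} = q ^ (n - 2) - 1 := by
  classical
  have hzero := hd.card_zeros hK hq hdb
  have hcount := _root_.card_common_zeros (fun u : Lˣ => f u) (fun u : Lˣ => f (a * u))
    (q ^ (n - 1) - 1) ?_ ?_
  · rw [Nat.card_eq_fintype_card, Fintype.card_subtype]
    rw [hK, Fintype.card_units, hL] at hcount
    obtain ⟨k, rfl⟩ := Nat.exists_eq_add_of_le' hn
    have hk : 1 ≤ q ^ k := Nat.one_le_pow _ _ (by omega)
    have hk1 : 1 ≤ q ^ (k + 1) := Nat.one_le_pow _ _ (by omega)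
    have hk2 : 1 ≤ q ^ (k + 2) := Nat.one_le_pow _ _ (by omega)
    simp only [Nat.add_sub_cancel, show k + 2 - 1 = k + 1 from rfl] at hcount ⊢
    apply Nat.eq_of_mul_eq_mul_left (show 0 < q by omega)
    zify [hk, hk1, hk2] at hcount ⊢
    linear_combination hcount
  · intro t
    rw [← Fintype.card_subtype, ← Nat.card_eq_fintype_card]
    by_cases ht : t = 0
    · rw [← hzero]
      exact Nat.card_congr (Equiv.subtypeEquivRight fun u => by simp [ht, eq_comm])
    obtain ⟨c, hc⟩ := exists_units_pow_eq hK hd.1 (Units.mk0 t ht)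
    have hct : (c : K) ^ d = t := by simpa using congrArg Units.val hc
    have hne : algebraMap K L c * a ≠ 1 := fun h => ha ⟨c⁻¹, by
      rw [map_inv, inv_eq_iff_mul_eq_one]
      exact Units.ext h⟩
    have hbal := (hdb (algebraMap K L c * a) (by simp) hne).1
    rw [card_ne_zero_and_eq_card_units fun x => f (algebraMap K L c * a * x) - f x = 0] at hbal
    rw [← hbal]
    refine Nat.card_congr (Equiv.subtypeEquivRight fun u => ?_)
    rw [mul_assoc, hd.2 c c.ne_zero _ (by simp), hct, sub_eq_zero]
  · rw [← Fintype.card_subtype, ← Nat.card_eq_fintype_card, ← hzero]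
    exact Nat.card_congr ((Equiv.mulLeft a).subtypeEquiv fun u => by simp)

end DHomogeneous

/-- If `f : L∖{0} → K` is surjective, difference balanced and `d`-homogeneous, then
`D₀ = {x : f(x) = 0}` is a divisible difference set in `L^×` relative to `K^×` with
parameters `((qⁿ−1)/(q−1), q−1, q^{n−1}−1, q^{n−1}−1, q^{n−2}−1)`. -/
theorem stmt_17 {K L : Type*} [Field K] [Field L] [Algebra K L] [Fintype K] [Fintype L]
    (p m n q : ℕ) (hp : p.Prime) (hodd : Odd p) (hm : 1 ≤ m) (hn : 2 ≤ n)
    (hq : q = p ^ m) (hK : Fintype.card K = q) (hL : Fintype.card L = q ^ n)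
    (f : L → K) (hsurj : ∀ b : K, ∃ x : L, x ≠ 0 ∧ f x = b)
    (hdb : IsDiffBalanced q n f) (d : ℕ) (hd : IsDHomogeneous q d f) :
    IsDivDiffSet {u : Lˣ | f (u : L) = 0}
      (Units.map (algebraMap K L).toMonoidHom).range
      ((q ^ n - 1) / (q - 1)) (q - 1) (q ^ (n - 1) - 1)
      (q ^ (n - 1) - 1) (q ^ (n - 2) - 1) := by
  have hq2 : 2 < q := by
    have hp2 : 2 < p := lt_of_le_of_ne hp.two_le (by rintro rfl; exact absurd hodd (by decide))
    exact hq ▸ hp2.trans_le (Nat.le_self_pow (by omega) p)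
  have hzero := hd.card_zeros hK hq2 hdb
  refine ⟨?_, ?_, hzero, ?_, ?_⟩
  · rw [Nat.card_units, Nat.card_eq_fintype_card, hL]
    exact (Nat.div_mul_cancel (by simpa using Nat.sub_dvd_pow_sub_pow q 1 n)).symm
  · rw [← hK, ← Nat.card_eq_fintype_card, ← Nat.card_units]
    exact Nat.card_congr (MonoidHom.ofInjective
      (Units.map_injective (algebraMap K L).injective)).toEquiv.symm
  · rintro _ ⟨c, rfl⟩ -
    rw [card_quotient_representations, ← hzero]
    refine Nat.card_congr (Equiv.subtypeEquivRight fun u => ?_)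
    have hcu : f (algebraMap K L c * u) = (c : K) ^ d * f u := hd.2 c c.ne_zero u u.ne_zero
    simp +contextual [hcu]
  · intro g hg
    rw [card_quotient_representations]
    exact hd.card_common_zeros hK hq2 hn hL hdb g hg
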